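/- Let Δ be the simplicial complex on vertex set {1,2,3,4,5,6} whose facets are {1,2,3}, {1,2,4}, {1,2,5}, {1,3,4}, {1,3,6}, {2,4,5}, {2,5,6}, {3,4,6}, {3,5,6}, {4,5,6}. Then M_1(Δ) ≤ 2 and M_0(Δ) ≥ 3; in particular M_1(Δ) < M_0(Δ). -/

import Mathlib

/-- A finite abstract simplicial complex on vertex set `ℕ`: a finite family of
finite sets (faces) closed under taking subsets. -/
structure SComplex where
  faces : Finset (Finset ℕ)
  down_closed : ∀ ⦃σ⦄, σ ∈ faces → ∀ ⦃τ⦄, τ ⊆ σ → τ ∈ faces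

namespace SComplex

/-- The vertex set of a simplicial complex. -/
def vertices (X : SComplex) : Finset ℕ := X.faces.sup id

/-- `σ` is a maximal face (facet) of `X`. -/
def IsMaximalFace (X : SComplex) (σ : Finset ℕ) : Prop :=
  σ ∈ X.faces ∧ ∀ τ ∈ X.faces, σ ⊆ τ → τ = σ

/-- `(γ, σ)` is a free pair: `σ` is the unique maximal face containing `γ`. -/
def IsFreePair (X : SComplex) (γ σ : Finset ℕ) : Prop :=
  γ ∈ X.faces ∧ X.IsMaximalFace σ ∧ γ ⊆ σ ∧
    ∀ τ, X.IsMaximalFace τ → γ ⊆ τ → τ = σ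

/-- The empty complex. -/
def empty : SComplex := ⟨∅, by intro σ h; simp at h⟩

/-- An elementary `d`-collapse from `X` to `Y`: there is a free pair `(γ, σ)`
with `|γ| ≤ d`, and `Y` is obtained from `X` by removing all faces `τ` with
`γ ⊆ τ ⊆ σ`. -/
def ElemCollapse (d : ℕ) (X Y : SComplex) : Prop :=
  ∃ γ σ, X.IsFreePair γ σ ∧ γ.card ≤ d ∧
    Y.faces = X.faces.filter fun τ => ¬ (γ ⊆ τ ∧ τ ⊆ σ)

/-- `X` is `d`-collapsible: some finite sequence of elementary `d`-collapses
reduces `X` to the empty complex. -/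
def Collapsible (d : ℕ) (X : SComplex) : Prop :=
  Relation.ReflTransGen (ElemCollapse d) X SComplex.empty

/-- The collapsibility number `C(X)`: the least `d` such that `X` is
`d`-collapsible. -/
noncomputable def collapsibility (X : SComplex) : ℕ :=
  sInf {d | X.Collapsible d}

/-- The link of a face `σ`. -/
def link (X : SComplex) (σ : Finset ℕ) : SComplex where
  faces := X.faces.filter fun τ => σ ∩ τ = ∅ ∧ σ ∪ τ ∈ X.faces
  down_closed := by
    intro τ hτ ρ hρ
    simp only [Finset.mem_filter] at hτ ⊢
    have h1 : σ ∩ ρ ⊆ σ ∩ τ := Finset.inter_subset_inter (le_refl σ) hρ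
    rw [hτ.2.1] at h1
    exact ⟨X.down_closed hτ.1 hρ, Finset.subset_empty.mp h1,
      X.down_closed hτ.2.2 (Finset.union_subset_union (le_refl σ) hρ)⟩

/-- The deletion of a face `σ`. -/
def del (X : SComplex) (σ : Finset ℕ) : SComplex where
  faces := X.faces.filter fun τ => ¬ σ ⊆ τ
  down_closed := by
    intro τ hτ ρ hρ
    simp only [Finset.mem_filter] at hτ ⊢
    exact ⟨X.down_closed hτ.1 hρ, fun hc => hτ.2 (hc.trans hρ)⟩

/-- The induced subcomplex `X[A]` on a set `A` of vertices. -/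
def induced (X : SComplex) (A : Finset ℕ) : SComplex where
  faces := X.faces.filter fun τ => τ ⊆ A
  down_closed := by
    intro τ hτ ρ hρ
    simp only [Finset.mem_filter] at hτ ⊢
    exact ⟨X.down_closed hτ.1 hρ, hρ.trans hτ.2⟩

end SComplex
namespace SComplex

instance : DecidableEq SComplex := fun X Y =>
  decidable_of_iff (X.faces = Y.faces) (by cases X; cases Y; simp)

lemma singleton_mem_faces {X : SComplex} {v : ℕ} (hv : v ∈ X.vertices) :
    ({v} : Finset ℕ) ∈ X.faces := by
  rw [vertices, Finset.mem_sup] at hv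
  obtain ⟨σ, hσ, hvσ⟩ := hv
  exact X.down_closed hσ (Finset.singleton_subset_iff.mpr hvσ)

lemma link_faces_card_lt {X : SComplex} {σ : Finset ℕ} (hσ : σ ∈ X.faces)
    (hne : σ.Nonempty) : (X.link σ).faces.card < X.faces.card := by
  refine Finset.card_lt_card
    ((Finset.ssubset_iff_of_subset (Finset.filter_subset _ _)).mpr ⟨σ, hσ, ?_⟩)
  simp only [Finset.mem_filter, Finset.inter_self]
  intro h
  exact hne.ne_empty h.2.1

lemma del_faces_card_lt {X : SComplex} {σ : Finset ℕ} (hσ : σ ∈ X.faces) :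
    (X.del σ).faces.card < X.faces.card := by
  refine Finset.card_lt_card
    ((Finset.ssubset_iff_of_subset (Finset.filter_subset _ _)).mpr ⟨σ, hσ, ?_⟩)
  simp [Finset.mem_filter]

/-- `X^o`: the set of vertices `v` of `X` with `lk(v, X) ≠ del(v, X)`. -/
def coreVertices (X : SComplex) : Finset ℕ :=
  X.vertices.filter fun v => X.link {v} ≠ X.del {v}

/-- The invariant `M(X)` of Biyikoğlu and Civan: `M(X) = 0` if `X^o = ∅`, and
`M(X) = min_{v ∈ X^o} max {M(lk(v, X)) + 1, M(del(v, X))}` otherwise. -/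
noncomputable def Mnum (X : SComplex) : ℕ :=
  if h : (coreVertices X).Nonempty then
    (coreVertices X).attach.inf' (Finset.attach_nonempty_iff.mpr h)
      (fun v => max (Mnum (X.link {v.1}) + 1) (Mnum (X.del {v.1})))
  else 0
termination_by X.faces.card
decreasing_by
  · exact link_faces_card_lt
      (singleton_mem_faces (Finset.mem_of_mem_filter _ v.2))
      (Finset.singleton_nonempty _)
  · exact del_faces_card_lt
      (singleton_mem_faces (Finset.mem_of_mem_filter _ v.2))

end SComplex
namespace SComplex

/-- `X_(k)^o`: the set of `k`-dimensional faces `σ` of `X` with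
`lk(σ, X) ≠ X[V(X) ∖ σ]`. -/
def kCore (X : SComplex) (k : ℕ) : Finset (Finset ℕ) :=
  X.faces.filter fun σ => σ.card = k + 1 ∧ X.link σ ≠ X.induced (X.vertices \ σ)

mutual

/-- `M'_k(X)`: equal to `M(X)` for `k = 0`; for `k ≥ 1` it is `M_{k-1}(X)` if
`X_(k)^o = ∅` and
`min_{σ ∈ X_(k)^o} max {M'_k(del(σ, X)), M'_k(lk(σ, X)) + k + 1}` otherwise. -/
noncomputable def Mk' : ℕ → SComplex → ℕ
  | 0, X => Mnum X
  | k + 1, X =>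
    if h : (X.kCore (k + 1)).Nonempty then
      (X.kCore (k + 1)).attach.inf' (Finset.attach_nonempty_iff.mpr h)
        (fun σ => max (Mk' (k + 1) (X.del σ.1)) (Mk' (k + 1) (X.link σ.1) + (k + 1) + 1))
    else Mk k X
termination_by k X => (k, X.faces.card, 0)
decreasing_by
  · apply Prod.Lex.right
    apply Prod.Lex.left
    exact del_faces_card_lt (Finset.mem_of_mem_filter _ σ.2)
  · apply Prod.Lex.right
    apply Prod.Lex.left
    have hc := (Finset.mem_filter.mp σ.2).2.1
    exact link_faces_card_lt (Finset.mem_of_mem_filter _ σ.2)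
      (Finset.card_pos.mp (by omega))
  · apply Prod.Lex.left; omega

/-- `M_k(X)`: `M_0(X) = M(X)` and `M_k(X) = min {M'_k(X), M_{k-1}(X)}`. -/
noncomputable def Mk : ℕ → SComplex → ℕ
  | 0, X => Mnum X
  | k + 1, X => min (Mk' (k + 1) X) (Mk k X)
termination_by k X => (k, X.faces.card, 1)
decreasing_by
  · apply Prod.Lex.right
    apply Prod.Lex.right
    omega
  · apply Prod.Lex.left; omega

end

end SComplex

/-- The ten facets of the complex `Δ` (Example V6F10-6 of Morton–Takahashi). -/
def deltaFacets : Finset (Finset ℕ) :=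
  {{1, 2, 3}, {1, 2, 4}, {1, 2, 5}, {1, 3, 4}, {1, 3, 6}, {2, 4, 5}, {2, 5, 6},
    {3, 4, 6}, {3, 5, 6}, {4, 5, 6}}

/-- The simplicial complex `Δ` on `{1, …, 6}` whose facets are `deltaFacets`:
its faces are exactly the subsets of these ten sets. -/
def Delta : SComplex where
  faces := deltaFacets.biUnion Finset.powerset
  down_closed := by
    intro σ hσ τ hτ
    simp only [Finset.mem_biUnion, Finset.mem_powerset] at hσ ⊢
    obtain ⟨f, hf, hσf⟩ := hσ
    exact ⟨f, hf, hτ.trans hσf⟩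

/-!
`M` is monotone under induced subcomplexes. Since the link of every vertex of `Δ` contains an
induced cycle, and every vertex link in a cycle is not a simplex, every vertex link of `Δ` has
`M ≥ 2`; so whichever vertex the recursion for `M(Δ)` picks first costs at least `3`.

For `M_1`, on the other hand, ten edges can be deleted from `Δ` one after the other, each having a
single vertex as its link at that moment. As `M'_1` vanishes on simplices, each such deletion costs
only `2`, and what is left is a graph, for which the dimension bound `M'_k ≤ dim + 1` gives `2`.
-/

namespace SComplex

variable {X : SComplex} {A σ τ : Finset ℕ} {d k u v w : ℕ}

lemma eq_of_mem_faces_iff {X Y : SComplex} (h : ∀ τ, τ ∈ X.faces ↔ τ ∈ Y.faces) : X = Y := by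
  cases X
  cases Y
  congr
  exact Finset.ext h

lemma mem_vertices : v ∈ X.vertices ↔ {v} ∈ X.faces :=
  ⟨singleton_mem_faces, fun h => Finset.mem_sup.mpr ⟨{v}, h, Finset.mem_singleton_self v⟩⟩

lemma mem_link : τ ∈ (X.link σ).faces ↔ Disjoint σ τ ∧ σ ∪ τ ∈ X.faces := by
  simp only [link, Finset.mem_filter, ← Finset.disjoint_iff_inter_eq_empty]
  exact ⟨And.right, fun h => ⟨X.down_closed h.2 Finset.subset_union_right, h⟩⟩

lemma mem_link_singleton : τ ∈ (X.link {v}).faces ↔ v ∉ τ ∧ insert v τ ∈ X.faces := by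
  rw [mem_link, Finset.disjoint_singleton_left, Finset.insert_eq]

lemma mem_del : τ ∈ (X.del σ).faces ↔ τ ∈ X.faces ∧ ¬ σ ⊆ τ := by
  simp only [del, Finset.mem_filter]

lemma mem_del_singleton : τ ∈ (X.del {v}).faces ↔ τ ∈ X.faces ∧ v ∉ τ := by
  rw [mem_del, Finset.singleton_subset_iff]

lemma mem_induced : τ ∈ (X.induced A).faces ↔ τ ∈ X.faces ∧ τ ⊆ A := by
  simp only [induced, Finset.mem_filter]

lemma del_del_comm : (X.del σ).del τ = (X.del τ).del σ :=
  eq_of_mem_faces_iff fun ρ => by simp only [mem_del]; tauto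

lemma link_del_comm (h : Disjoint σ τ) : (X.del σ).link τ = (X.link τ).del σ :=
  eq_of_mem_faces_iff fun ρ => by
    have hsub : σ ⊆ τ ∪ ρ ↔ σ ⊆ ρ :=
      ⟨h.left_le_of_le_sup_left, fun hρ => hρ.trans Finset.subset_union_right⟩
    simp only [mem_link, mem_del, hsub, and_assoc]

lemma del_induced : (X.induced A).del σ = (X.del σ).induced A :=
  eq_of_mem_faces_iff fun τ => by simp only [mem_del, mem_induced]; tauto

lemma link_induced (hσ : σ ⊆ A) : (X.induced A).link σ = (X.link σ).induced A :=
  eq_of_mem_faces_iff fun τ => by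
    simp only [mem_link, mem_induced, Finset.union_subset_iff]; tauto

lemma induced_del_of_not_subset (hσ : ¬ σ ⊆ A) : (X.del σ).induced A = X.induced A :=
  eq_of_mem_faces_iff fun τ => by
    simp only [mem_induced, mem_del]
    exact ⟨fun h => ⟨h.1.1, h.2⟩, fun h => ⟨⟨h.1, fun hτ => hσ (hτ.trans h.2)⟩, h.2⟩⟩

@[elab_as_elim]
lemma link_del_induction {P : SComplex → Prop}
    (step : ∀ X, (∀ σ ∈ X.faces, σ.Nonempty → P (X.link σ) ∧ P (X.del σ)) → P X)
    (X : SComplex) : P X :=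
  step X fun σ hσ hne =>
    have := link_faces_card_lt hσ hne
    have := del_faces_card_lt hσ
    ⟨link_del_induction step (X.link σ), link_del_induction step (X.del σ)⟩
termination_by X.faces.card

lemma mem_coreVertices :
    v ∈ X.coreVertices ↔ {v} ∈ X.faces ∧ ∃ τ ∈ X.faces, v ∉ τ ∧ insert v τ ∉ X.faces := by
  rw [coreVertices, Finset.mem_filter, mem_vertices]
  refine and_congr_right fun _ => ⟨fun hne => ?_, ?_⟩
  · by_contra! hcone
    refine hne (eq_of_mem_faces_iff fun τ => ?_)
    rw [mem_link_singleton, mem_del_singleton]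
    exact ⟨fun h => ⟨X.down_closed h.2 (Finset.subset_insert v τ), h.1⟩,
      fun h => ⟨h.2, hcone τ h.1 h.2⟩⟩
  · rintro ⟨τ, hτ, hvτ, hins⟩ heq
    have hlink : τ ∈ (X.link {v}).faces := heq ▸ mem_del_singleton.mpr ⟨hτ, hvτ⟩
    exact hins (mem_link_singleton.mp hlink).2

lemma singleton_mem_of_mem_coreVertices (hv : v ∈ X.coreVertices) : {v} ∈ X.faces :=
  (mem_coreVertices.mp hv).1

lemma coreVertices_link_subset : (X.link σ).coreVertices ⊆ X.coreVertices := by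
  intro v hv
  obtain ⟨hvX, τ, hτ, hvτ, hins⟩ := mem_coreVertices.mp hv
  rw [mem_link] at hvX hτ hins
  have hvσ : v ∉ σ := Finset.disjoint_singleton_right.mp hvX.1
  refine mem_coreVertices.mpr ⟨X.down_closed hvX.2 Finset.subset_union_right, σ ∪ τ, hτ.2,
    Finset.notMem_union.mpr ⟨hvσ, hvτ⟩, fun h => hins ?_⟩
  rw [Finset.disjoint_insert_right, Finset.union_insert]
  exact ⟨⟨hvσ, hτ.1⟩, h⟩

lemma coreVertices_induced_subset : (X.induced A).coreVertices ⊆ X.coreVertices := by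
  intro v hv
  obtain ⟨hvX, τ, hτ, hvτ, hins⟩ := mem_coreVertices.mp hv
  rw [mem_induced] at hvX hτ hins
  exact mem_coreVertices.mpr ⟨hvX.1, τ, hτ.1, hvτ, fun h => hins ⟨h, by grind⟩⟩

lemma coreVertices_del_singleton_subset : (X.del {w}).coreVertices ⊆ X.coreVertices := by
  intro v hv
  obtain ⟨hvX, τ, hτ, hvτ, hins⟩ := mem_coreVertices.mp hv
  rw [mem_del_singleton] at hvX hτ hins
  exact mem_coreVertices.mpr ⟨hvX.1, τ, hτ.1, hvτ, fun h => hins ⟨h, by grind⟩⟩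

lemma insert_mem_faces_of_notMem_coreVertices (hv : {v} ∈ X.faces) (hcore : v ∉ X.coreVertices)
    (hτ : τ ∈ X.faces) : insert v τ ∈ X.faces := by
  by_cases hvτ : v ∈ τ
  · rwa [Finset.insert_eq_of_mem hvτ]
  · by_contra hins
    exact hcore (mem_coreVertices.mpr ⟨hv, τ, hτ, hvτ, hins⟩)

lemma union_mem_faces_of_coreVertices_eq_empty (hcore : X.coreVertices = ∅) (hσ : σ ∈ X.faces)
    (hτ : τ ∈ X.faces) : σ ∪ τ ∈ X.faces := by
  induction σ using Finset.induction_on with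
  | empty => rwa [Finset.empty_union]
  | insert v σ _ ih =>
    rw [Finset.insert_union]
    exact insert_mem_faces_of_notMem_coreVertices (X.down_closed hσ (by simp))
      (hcore ▸ Finset.notMem_empty v) (ih (X.down_closed hσ (Finset.subset_insert v σ)))

/-- A vertex outside `X^o` is a cone point of `X`, and `del {v}` is the base of the cone. -/
lemma coreVertices_del_singleton_of_notMem (hv : v ∉ X.coreVertices) :
    (X.del {v}).coreVertices = X.coreVertices := by
  refine coreVertices_del_singleton_subset.antisymm fun w hw => ?_
  obtain ⟨hwX, τ, hτ, hwτ, hins⟩ := mem_coreVertices.mp hw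
  have hvw : v ≠ w := fun h => hv (h ▸ hw)
  refine mem_coreVertices.mpr ⟨mem_del_singleton.mpr ⟨hwX, by simpa using hvw⟩, τ.erase v,
    mem_del_singleton.mpr ⟨X.down_closed hτ (Finset.erase_subset v τ), by simp⟩,
    fun h => hwτ (Finset.mem_of_mem_erase h), fun hbase => hins ?_⟩
  have hbaseX := (mem_del_singleton.mp hbase).1
  by_cases hvτ : v ∈ τ
  · have hvX := X.down_closed hτ (Finset.singleton_subset_iff.mpr hvτ)
    have hcone := insert_mem_faces_of_notMem_coreVertices hvX hv hbaseX
    rwa [Finset.insert_comm, Finset.insert_erase hvτ] at hcone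
  · rwa [Finset.erase_eq_of_notMem hvτ] at hbaseX

lemma Mnum_eq_zero (h : X.coreVertices = ∅) : Mnum X = 0 := by
  rw [Mnum, dif_neg (Finset.not_nonempty_iff_eq_empty.mpr h)]

lemma Mnum_le_max (hv : v ∈ X.coreVertices) :
    Mnum X ≤ max (Mnum (X.link {v}) + 1) (Mnum (X.del {v})) := by
  rw [Mnum, dif_pos ⟨v, hv⟩]
  exact Finset.inf'_le _ (Finset.mem_attach _ ⟨v, hv⟩)

lemma exists_Mnum_eq_max (h : X.coreVertices.Nonempty) :
    ∃ v ∈ X.coreVertices, Mnum X = max (Mnum (X.link {v}) + 1) (Mnum (X.del {v})) := by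
  rw [Mnum, dif_pos h]
  obtain ⟨v, -, hv⟩ := Finset.exists_mem_eq_inf' (Finset.attach_nonempty_iff.mpr h)
    fun v => max (Mnum (X.link {v.1}) + 1) (Mnum (X.del {v.1}))
  exact ⟨v.1, v.2, hv⟩

lemma Mnum_pos (h : X.coreVertices.Nonempty) : 0 < Mnum X := by
  obtain ⟨v, -, hv⟩ := exists_Mnum_eq_max h
  omega

lemma Mnum_le_Mnum_del_singleton (hv : v ∉ X.coreVertices) : Mnum X ≤ Mnum (X.del {v}) := by
  induction X using link_del_induction with
  | step X ih =>
    rcases X.coreVertices.eq_empty_or_nonempty with hcore | hcore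
    · simp only [Mnum_eq_zero hcore, zero_le]
    rw [← coreVertices_del_singleton_of_notMem hv] at hcore
    obtain ⟨w, hw, hmax⟩ := exists_Mnum_eq_max hcore
    have hwX : w ∈ X.coreVertices := coreVertices_del_singleton_subset hw
    have hvw : v ≠ w := fun h => hv (h ▸ hwX)
    obtain ⟨ihlink, ihdel⟩ :=
      ih {w} (singleton_mem_of_mem_coreVertices hwX) (Finset.singleton_nonempty w)
    have hlink := ihlink fun h => hv (coreVertices_link_subset h)
    have hdel := ihdel fun h => hv (coreVertices_del_singleton_subset h)
    calc Mnum X ≤ max (Mnum (X.link {w}) + 1) (Mnum (X.del {w})) := Mnum_le_max hwX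
      _ ≤ max (Mnum ((X.link {w}).del {v}) + 1) (Mnum ((X.del {w}).del {v})) := by gcongr
      _ = Mnum (X.del {v}) := by
        rw [hmax, link_del_comm (Finset.disjoint_singleton.mpr hvw), del_del_comm]

theorem Mnum_induced_le (X : SComplex) (A : Finset ℕ) : Mnum (X.induced A) ≤ Mnum X := by
  induction X using link_del_induction with
  | step X ih =>
    rcases X.coreVertices.eq_empty_or_nonempty with hcore | hcore
    · have hcoreA : (X.induced A).coreVertices = ∅ :=
        Finset.subset_empty.mp (hcore ▸ coreVertices_induced_subset)
      simp only [Mnum_eq_zero hcoreA, zero_le]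
    obtain ⟨v, hv, hmax⟩ := exists_Mnum_eq_max hcore
    obtain ⟨hlink, ihdel⟩ :=
      ih {v} (singleton_mem_of_mem_coreVertices hv) (Finset.singleton_nonempty v)
    have hdel : Mnum ((X.del {v}).induced A) ≤ Mnum X := ihdel.trans (hmax ▸ le_max_right _ _)
    by_cases hvA : {v} ⊆ A
    · by_cases hvcore : v ∈ (X.induced A).coreVertices
      · calc Mnum (X.induced A)
            ≤ max (Mnum ((X.induced A).link {v}) + 1) (Mnum ((X.induced A).del {v})) :=
              Mnum_le_max hvcore
          _ = max (Mnum ((X.link {v}).induced A) + 1) (Mnum ((X.del {v}).induced A)) := by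
              rw [link_induced hvA, del_induced]
          _ ≤ Mnum X := by omega
      · exact (Mnum_le_Mnum_del_singleton hvcore).trans (del_induced ▸ hdel)
    · rwa [induced_del_of_not_subset hvA] at hdel

lemma lt_Mnum_of_forall_le_Mnum_link (hX : X.vertices.Nonempty) (hd : 0 < d)
    (hlink : ∀ v ∈ X.vertices, d ≤ Mnum (X.link {v})) : d < Mnum X := by
  have hcore : X.coreVertices.Nonempty := by
    obtain ⟨v, hv⟩ := hX
    by_contra hempty
    have hzero : Mnum (X.link {v}) = 0 := Mnum_eq_zero <| Finset.subset_empty.mp <|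
      Finset.not_nonempty_iff_eq_empty.mp hempty ▸ coreVertices_link_subset
    have := hlink v hv
    omega
  obtain ⟨v, hv, hmax⟩ := exists_Mnum_eq_max hcore
  have := hlink v (Finset.mem_of_mem_filter v hv)
  omega

lemma card_add_card_le_of_mem_link (hd : ∀ ρ ∈ X.faces, ρ.card ≤ d)
    (hτ : τ ∈ (X.link σ).faces) : σ.card + τ.card ≤ d := by
  obtain ⟨hdisj, hunion⟩ := mem_link.mp hτ
  exact Finset.card_union_of_disjoint hdisj ▸ hd _ hunion

theorem Mnum_le_of_forall_card_le (hd : ∀ τ ∈ X.faces, τ.card ≤ d) : Mnum X ≤ d := by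
  induction X using link_del_induction generalizing d with
  | step X ih =>
    rcases X.coreVertices.eq_empty_or_nonempty with hcore | ⟨v, hv⟩
    · simp only [Mnum_eq_zero hcore, zero_le]
    have hvX := singleton_mem_of_mem_coreVertices hv
    have hpos : 1 ≤ d := hd _ hvX
    obtain ⟨ihlink, ihdel⟩ := ih {v} hvX (Finset.singleton_nonempty v)
    have hlink : Mnum (X.link {v}) ≤ d - 1 := ihlink fun τ hτ =>
      Nat.le_sub_of_add_le' (card_add_card_le_of_mem_link hd hτ)
    have hdel : Mnum (X.del {v}) ≤ d := ihdel fun τ hτ => hd τ (mem_del.mp hτ).1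
    exact (Mnum_le_max hv).trans (by omega)

lemma Mk_le_Mk' (k : ℕ) (X : SComplex) : Mk k X ≤ Mk' k X := by
  cases k with
  | zero => rw [Mk, Mk']
  | succ k => rw [Mk]; exact min_le_left _ _

lemma Mk'_succ_eq_Mk (h : X.kCore (k + 1) = ∅) : Mk' (k + 1) X = Mk k X := by
  rw [Mk', dif_neg (Finset.not_nonempty_iff_eq_empty.mpr h)]

lemma Mk'_succ_le_max (hσ : σ ∈ X.kCore (k + 1)) :
    Mk' (k + 1) X ≤ max (Mk' (k + 1) (X.del σ)) (Mk' (k + 1) (X.link σ) + (k + 1) + 1) := by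
  rw [Mk', dif_pos ⟨σ, hσ⟩]
  exact Finset.inf'_le _ (Finset.mem_attach _ ⟨σ, hσ⟩)

lemma card_of_mem_kCore (hσ : σ ∈ X.kCore k) : σ.card = k + 1 :=
  (Finset.mem_filter.mp hσ).2.1

lemma mem_faces_of_mem_kCore (hσ : σ ∈ X.kCore k) : σ ∈ X.faces :=
  Finset.mem_of_mem_filter σ hσ

theorem Mk'_le_of_forall_card_le (hd : ∀ τ ∈ X.faces, τ.card ≤ d) : Mk' k X ≤ d := by
  induction k generalizing X d with
  | zero =>
    rw [Mk']
    exact Mnum_le_of_forall_card_le hd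
  | succ k ihk =>
    induction X using link_del_induction generalizing d with
    | step X ih =>
      rcases (X.kCore (k + 1)).eq_empty_or_nonempty with hcore | ⟨σ, hσ⟩
      · rw [Mk'_succ_eq_Mk hcore]
        exact (Mk_le_Mk' k X).trans (ihk hd)
      have hσX := mem_faces_of_mem_kCore hσ
      have hcard := card_of_mem_kCore hσ
      have hle := hd σ hσX
      obtain ⟨ihlink, ihdel⟩ := ih σ hσX (Finset.card_pos.mp (by omega))
      have hlink : Mk' (k + 1) (X.link σ) ≤ d - (k + 2) := ihlink fun τ hτ =>
        Nat.le_sub_of_add_le' (hcard ▸ card_add_card_le_of_mem_link hd hτ)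
      have hdel : Mk' (k + 1) (X.del σ) ≤ d := ihdel fun τ hτ => hd τ (mem_del.mp hτ).1
      exact (Mk'_succ_le_max hσ).trans (by omega)

lemma kCore_eq_empty (hcore : X.coreVertices = ∅) (k : ℕ) : X.kCore k = ∅ := by
  refine Finset.filter_eq_empty_iff.mpr fun σ hσ h => h.2 (eq_of_mem_faces_iff fun τ => ?_)
  rw [mem_link, mem_induced]
  constructor
  · rintro ⟨hdisj, hunion⟩
    have hτ := X.down_closed hunion Finset.subset_union_right
    refine ⟨hτ, Finset.subset_sdiff.mpr ⟨fun v hv => ?_, hdisj.symm⟩⟩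
    exact mem_vertices.mpr (X.down_closed hτ (Finset.singleton_subset_iff.mpr hv))
  · rintro ⟨hτ, hsub⟩
    exact ⟨(Finset.subset_sdiff.mp hsub).2.symm,
      union_mem_faces_of_coreVertices_eq_empty hcore hσ hτ⟩

lemma Mk'_eq_zero (hcore : X.coreVertices = ∅) (k : ℕ) : Mk' k X = 0 := by
  induction k with
  | zero => rw [Mk', Mnum_eq_zero hcore]
  | succ k ih =>
    rw [Mk'_succ_eq_Mk (kCore_eq_empty hcore (k + 1))]
    exact Nat.eq_zero_of_le_zero (ih ▸ Mk_le_Mk' k X)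

/-- The faces of `L` can be deleted from `X` in the given order, each of them lying in the
`k`-dimensional core of the complex reached so far and having a simplex as its link there.
That the link is a simplex is encoded by its `X^o` being empty. -/
def IsFreeDeletion (k : ℕ) : SComplex → List (Finset ℕ) → Prop
  | _, [] => True
  | X, σ :: L => σ ∈ X.kCore k ∧ (X.link σ).coreVertices = ∅ ∧ IsFreeDeletion k (X.del σ) L

instance decidableIsFreeDeletion (k : ℕ) :
    (X : SComplex) → (L : List (Finset ℕ)) → Decidable (IsFreeDeletion k X L)
  | _, [] => .isTrue trivial
  | X, σ :: L =>
    have := decidableIsFreeDeletion k (X.del σ) L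
    inferInstanceAs (Decidable (_ ∧ _ ∧ _))

theorem IsFreeDeletion.Mk'_succ_le {L : List (Finset ℕ)} (hL : IsFreeDeletion (k + 1) X L) :
    Mk' (k + 1) X ≤ max (Mk' (k + 1) (L.foldl del X)) (k + 2) := by
  induction L generalizing X with
  | nil => exact le_max_left _ _
  | cons σ L ih =>
    obtain ⟨hσ, hlink, hL⟩ := hL
    have hdel := ih hL
    have hstep := Mk'_succ_le_max hσ
    rw [Mk'_eq_zero hlink] at hstep
    rw [List.foldl_cons]
    omega

end SComplex

open SComplex

/-- Edges of `Δ` whose successive deletion through simplex links leaves a graph. -/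
def deltaFreeEdges : List (Finset ℕ) :=
  [{1, 5}, {1, 6}, {2, 3}, {1, 2}, {1, 3}, {2, 4}, {2, 5}, {3, 4}, {3, 5}, {4, 5}]

/-- The vertex set of an induced cycle in the link of the vertex `v` of `Δ`, with the junk value
`∅` when `v` is not a vertex. -/
def deltaLinkCycle : ℕ → Finset ℕ
  | 1 => {2, 3, 4}
  | 2 => {1, 4, 5}
  | 3 => {1, 4, 6}
  | 4 => {1, 2, 3, 5, 6}
  | 5 => {2, 4, 6}
  | 6 => {3, 4, 5}
  | _ => ∅

lemma isFreeDeletion_deltaFreeEdges : IsFreeDeletion 1 Delta deltaFreeEdges := by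
  decide +kernel

lemma card_le_two_of_mem_foldl_del_deltaFreeEdges :
    ∀ τ ∈ (deltaFreeEdges.foldl del Delta).faces, τ.card ≤ 2 := by
  decide +kernel

lemma vertices_nonempty_induced_deltaLinkCycle : ∀ v ∈ Delta.vertices,
    ((Delta.link {v}).induced (deltaLinkCycle v)).vertices.Nonempty := by
  decide +kernel

lemma coreVertices_nonempty_link_deltaLinkCycle : ∀ v ∈ Delta.vertices,
    ∀ u ∈ ((Delta.link {v}).induced (deltaLinkCycle v)).vertices,
      (((Delta.link {v}).induced (deltaLinkCycle v)).link {u}).coreVertices.Nonempty := by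
  decide +kernel

theorem Mk'_one_Delta_le : Mk' 1 Delta ≤ 2 :=
  isFreeDeletion_deltaFreeEdges.Mk'_succ_le.trans <| max_le
    (Mk'_le_of_forall_card_le card_le_two_of_mem_foldl_del_deltaFreeEdges) le_rfl

lemma one_lt_Mnum_link_Delta {v : ℕ} (hv : v ∈ Delta.vertices) :
    1 < Mnum (Delta.link {v}) :=
  calc 1 < Mnum ((Delta.link {v}).induced (deltaLinkCycle v)) :=
        lt_Mnum_of_forall_le_Mnum_link (vertices_nonempty_induced_deltaLinkCycle v hv) one_pos
          fun u hu => Mnum_pos (coreVertices_nonempty_link_deltaLinkCycle v hv u hu)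
    _ ≤ Mnum (Delta.link {v}) := Mnum_induced_le _ _

theorem two_lt_Mnum_Delta : 2 < Mnum Delta :=
  lt_Mnum_of_forall_le_Mnum_link (by decide +kernel) two_pos fun _ => one_lt_Mnum_link_Delta

/-- For the complex `Δ` above, `M_1(Δ) ≤ 2` and `M_0(Δ) ≥ 3`;
in particular `M_1(Δ) < M_0(Δ)`. -/
theorem M1_lt_M0_Delta :
    SComplex.Mk 1 Delta ≤ 2 ∧ 3 ≤ SComplex.Mk 0 Delta ∧
      SComplex.Mk 1 Delta < SComplex.Mk 0 Delta := by
  have hM1 : Mk 1 Delta ≤ 2 := (Mk_le_Mk' 1 Delta).trans Mk'_one_Delta_le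
  have hM0 : 3 ≤ Mk 0 Delta := by
    rw [Mk]
    exact two_lt_Mnum_Delta
  exact ⟨hM1, hM0, Nat.lt_of_le_of_lt hM1 hM0⟩
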